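/- The number of symmetric set partitions of {1,...,k,1',...,k'} (set partitions fixed by the flip i ↔ i') equals the sum over partitions λ of size at most k of the number of vacillating tableaux of shape λ and length 2k. -/

import Mathlib

/-- A vacillating tableau of length `2k` (Γ_k indexing): a sequence of Young diagrams
starting at the empty diagram, where at each half-step at most one box is removed and at
each whole step at most one box is added; constant after position `2k`. -/
def VacSeq (k : ℕ) (f : ℕ → YoungDiagram) : Prop :=
  f 0 = ⊥ ∧
  (∀ i < k, f (2*i+1) ≤ f (2*i) ∧ (f (2*i)).card ≤ (f (2*i+1)).card + 1) ∧
  (∀ i < k, f (2*i+1) ≤ f (2*i+2) ∧ (f (2*i+2)).card ≤ (f (2*i+1)).card + 1) ∧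
  (∀ j, 2*k ≤ j → f j = f (2*k))

/-- The number of vacillating tableaux of shape `lam` and length `2k`. -/
noncomputable def mVT (k : ℕ) (lam : YoungDiagram) : ℕ :=
  Nat.card {f : ℕ → YoungDiagram // VacSeq k f ∧ f (2*k) = lam}

/-!
Half-steps and whole steps of a vacillating tableau are governed by the operators `1 + D` and
`1 + U`, where `D` and `U` sum a function on Young's lattice over lower and upper covers. Young's
lattice is modular and each diagram has exactly one more upper cover than lower covers, so
`U D = D U + 1`, while `D` vanishes at the empty diagram and `U 1 = D 1 + 1`. Hence
`F m j = ((1 + U) ^ j ((1 + D) (1 + U)) ^ m 1) ∅`, which counts tableaux of length `2k` at `m = k`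
and `j = 0`, satisfies `F (m + 1) j = F m (j + 1) + j F m j` and
`F 0 (j + 1) = 2 F 0 j + j F 0 (j - 1)`.

The second recurrence is that of partial involutions of a set with `j` elements: a point is
undefined, fixed, or exchanged with one of the others. The first is that of building an equivalence
relation one point at a time: the new point opens a class or joins one of the `j` present ones.
Therefore `F k 0` counts equivalence relations on `k` points with a partial involution of their
classes. These are the symmetric partitions: the classes of unprimed points determine those of
primed points, and symmetry says that the matching of unprimed with primed classes is an involution.
-/

open Finset

theorem pow_mul_eq_mul_pow_add_nsmul {R : Type*} [Semiring R] {a d : R} (h : a * d = d * a + 1)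
    (j : ℕ) : a ^ j * d = d * a ^ j + j • a ^ (j - 1) := by
  induction j with
  | zero => simp
  | succ j ih =>
    have hpow : j • (a * a ^ (j - 1)) = j • a ^ j := by
      rcases j with _ | j
      · simp
      · rw [Nat.add_sub_cancel, pow_succ']
    calc a ^ (j + 1) * d = (a * d) * a ^ j + j • (a * a ^ (j - 1)) := by
          rw [pow_succ', mul_assoc, ih, mul_add, mul_assoc, mul_smul_comm]
      _ = d * a ^ (j + 1) + (j + 1) • a ^ j := by
          rw [h, hpow, add_mul, one_mul, mul_assoc, ← pow_succ', add_assoc, ← succ_nsmul']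

/-- A modular lattice whose elements have finitely many lower covers and exactly one more upper
cover: a `1`-differential lattice in Stanley's sense. -/
class IsDifferentialLattice (L : Type*) [Lattice L] : Prop extends IsModularLattice L where
  finite_lowerCovers (a : L) : {b | b ⋖ a}.Finite
  ncard_upperCovers (a : L) : {b | a ⋖ b}.ncard = {b | b ⋖ a}.ncard + 1

/-- The operator on functions that sums over the finite set `s a` of neighbours of each point
`a`. -/
def neighborSum {L : Type*} (s : L → Finset L) : Module.End ℕ (L → ℕ) where
  toFun h a := ∑ b ∈ s a, h b
  map_add' f g := by ext a; simp [sum_add_distrib]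
  map_smul' c f := by ext a; simp [mul_sum]

theorem neighborSum_apply {L : Type*} (s : L → Finset L) (h : L → ℕ) (a : L) :
    neighborSum s h a = ∑ b ∈ s a, h b :=
  rfl

theorem one_add_neighborSum_apply {L : Type*} [DecidableEq L] {s : L → Finset L} {a : L}
    (ha : a ∉ s a) (h : L → ℕ) : (1 + neighborSum s) h a = ∑ b ∈ insert a (s a), h b := by
  rw [sum_insert ha]; rfl

namespace IsDifferentialLattice

section Covers

variable {L : Type*} [Lattice L] [IsDifferentialLattice L]

theorem finite_upperCovers (a : L) : {b | a ⋖ b}.Finite :=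
  Set.finite_of_ncard_ne_zero (by rw [ncard_upperCovers]; exact Nat.succ_ne_zero _)

/-- The elements covered by `a`, as a finset. -/
noncomputable def lowerCovers (a : L) : Finset L := (finite_lowerCovers a).toFinset

/-- The elements covering `a`, as a finset. -/
noncomputable def upperCovers (a : L) : Finset L := (finite_upperCovers a).toFinset

@[simp] theorem mem_lowerCovers {a b : L} : b ∈ lowerCovers a ↔ b ⋖ a := by simp [lowerCovers]

@[simp] theorem mem_upperCovers {a b : L} : b ∈ upperCovers a ↔ a ⋖ b := by simp [upperCovers]

theorem card_upperCovers (a : L) : #(upperCovers a) = #(lowerCovers a) + 1 := by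
  rw [upperCovers, lowerCovers, ← Set.ncard_eq_toFinset_card _ (finite_upperCovers a),
    ← Set.ncard_eq_toFinset_card _ (finite_lowerCovers a), ncard_upperCovers]

theorem mem_insert_lowerCovers [DecidableEq L] {a b : L} :
    b ∈ insert a (lowerCovers a) ↔ b ⩿ a := by
  rw [mem_insert, mem_lowerCovers, wcovBy_iff_eq_or_covBy]

theorem mem_insert_upperCovers [DecidableEq L] {a b : L} :
    b ∈ insert a (upperCovers a) ↔ a ⩿ b := by
  rw [mem_insert, mem_upperCovers, wcovBy_iff_eq_or_covBy, eq_comm]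

-- In a modular lattice `c ↦ a ⊓ b` and `c ↦ a ⊔ b` exchange the paths `a ⋖ c ⋗ b` and
-- `a ⋗ c ⋖ b` between distinct elements.
theorem sum_upperCovers_erase_lowerCovers [DecidableEq L] (h : L → ℕ) (a : L) :
    ∑ c ∈ upperCovers a, ∑ b ∈ (lowerCovers c).erase a, h b =
      ∑ c ∈ lowerCovers a, ∑ b ∈ (upperCovers c).erase a, h b := by
  rw [sum_sigma', sum_sigma']
  refine sum_bij' (fun p _ => ⟨a ⊓ p.2, p.2⟩) (fun p _ => ⟨a ⊔ p.2, p.2⟩) ?_ ?_ ?_ ?_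
    (fun _ _ => rfl) <;> simp only [mem_sigma, mem_erase, mem_upperCovers, mem_lowerCovers]
  · rintro ⟨c, b⟩ ⟨hac, hne, hbc⟩
    obtain rfl : a ⊔ b = c := hac.wcovBy.sup_eq hbc.wcovBy hne.symm
    exact ⟨CovBy.inf_of_sup_right hbc, hne, CovBy.inf_of_sup_left hac⟩
  · rintro ⟨c, b⟩ ⟨hca, hne, hcb⟩
    obtain rfl : a ⊓ b = c := hca.wcovBy.inf_eq hcb.wcovBy hne.symm
    exact ⟨CovBy.sup_of_inf_right hcb, hne, CovBy.sup_of_inf_left hca⟩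
  · rintro ⟨c, b⟩ ⟨hac, hne, hbc⟩
    rw [hac.wcovBy.sup_eq hbc.wcovBy hne.symm]
  · rintro ⟨c, b⟩ ⟨hca, hne, hcb⟩
    rw [hca.wcovBy.inf_eq hcb.wcovBy hne.symm]

end Covers

section Operators

variable (L : Type*) [Lattice L] [IsDifferentialLattice L]

/-- Summation over lower covers, acting on functions: the transpose of Stanley's down operator. -/
noncomputable def lowerSum : Module.End ℕ (L → ℕ) := neighborSum lowerCovers

/-- Summation over upper covers, acting on functions: the transpose of Stanley's up operator. -/
noncomputable def upperSum : Module.End ℕ (L → ℕ) := neighborSum upperCovers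

theorem upperSum_mul_lowerSum : upperSum L * lowerSum L = lowerSum L * upperSum L + 1 := by
  classical
  ext h a
  have hup : ∀ c ∈ upperCovers a,
      ∑ b ∈ lowerCovers c, h b = h a + ∑ b ∈ (lowerCovers c).erase a, h b := fun c hc =>
    (add_sum_erase _ h (mem_lowerCovers.2 (mem_upperCovers.1 hc))).symm
  have hdown : ∀ c ∈ lowerCovers a,
      ∑ b ∈ upperCovers c, h b = h a + ∑ b ∈ (upperCovers c).erase a, h b := fun c hc =>
    (add_sum_erase _ h (mem_upperCovers.2 (mem_lowerCovers.1 hc))).symm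
  calc ∑ c ∈ upperCovers a, ∑ b ∈ lowerCovers c, h b
      = #(upperCovers a) * h a + ∑ c ∈ upperCovers a, ∑ b ∈ (lowerCovers c).erase a, h b := by
        rw [sum_congr rfl hup, sum_add_distrib, sum_const, smul_eq_mul]
    _ = #(lowerCovers a) * h a + ∑ c ∈ lowerCovers a, ∑ b ∈ (upperCovers c).erase a, h b
          + h a := by
        rw [card_upperCovers, sum_upperCovers_erase_lowerCovers]; ring
    _ = ∑ c ∈ lowerCovers a, ∑ b ∈ upperCovers c, h b + h a := by
        rw [sum_congr rfl hdown, sum_add_distrib, sum_const, smul_eq_mul]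

theorem one_add_upperSum_mul_lowerSum :
    (1 + upperSum L) * lowerSum L = lowerSum L * (1 + upperSum L) + 1 := by
  rw [add_mul, mul_add, upperSum_mul_lowerSum, one_mul, mul_one, add_assoc]

theorem upperSum_one : upperSum L 1 = lowerSum L 1 + 1 := by
  ext a
  simp [upperSum, lowerSum, neighborSum_apply, card_upperCovers]

theorem lowerSum_bot [OrderBot L] (h : L → ℕ) : lowerSum L h ⊥ = 0 :=
  sum_eq_zero fun _ hb => absurd (mem_lowerCovers.1 hb).lt not_lt_bot

/-- `h` summed over the endpoints of all lazy ascending walks of length `j` from `⊥`, where each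
step goes to an upper cover or stays put. -/
noncomputable def ascentSum [OrderBot L] (j : ℕ) (h : L → ℕ) : ℕ := ((1 + upperSum L) ^ j) h ⊥

variable [OrderBot L]

theorem ascentSum_zero (h : L → ℕ) : ascentSum L 0 h = h ⊥ := by simp [ascentSum]

theorem ascentSum_add (j : ℕ) (h h' : L → ℕ) :
    ascentSum L j (h + h') = ascentSum L j h + ascentSum L j h' := by
  simp [ascentSum]

theorem ascentSum_one_add_upperSum (j : ℕ) (h : L → ℕ) :
    ascentSum L j ((1 + upperSum L) h) = ascentSum L (j + 1) h := by
  rw [ascentSum, ascentSum, pow_succ, Module.End.mul_apply]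

theorem ascentSum_lowerSum (j : ℕ) (h : L → ℕ) :
    ascentSum L j (lowerSum L h) = j * ascentSum L (j - 1) h := by
  rw [ascentSum, ← Module.End.mul_apply,
    pow_mul_eq_mul_pow_add_nsmul (one_add_upperSum_mul_lowerSum L)]
  simp [ascentSum, lowerSum_bot]

theorem ascentSum_succ_one (j : ℕ) :
    ascentSum L (j + 1) 1 = 2 * ascentSum L j 1 + j * ascentSum L (j - 1) 1 := by
  have h : (1 + upperSum L) 1 = (1 + 1 + lowerSum L 1 : L → ℕ) := by
    rw [LinearMap.add_apply, Module.End.one_apply, upperSum_one]; ring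
  rw [← ascentSum_one_add_upperSum, h, ascentSum_add, ascentSum_add, ascentSum_lowerSum]
  ring

theorem ascentSum_one_add_lowerSum (j : ℕ) (h : L → ℕ) :
    ascentSum L j ((1 + lowerSum L) ((1 + upperSum L) h)) =
      ascentSum L (j + 1) h + j * ascentSum L j h := by
  rw [LinearMap.add_apply, Module.End.one_apply, ascentSum_add, ascentSum_lowerSum,
    ascentSum_one_add_upperSum, ascentSum_one_add_upperSum]
  rcases j with _ | j <;> simp

end Operators

end IsDifferentialLattice

/-- `f` is a vacillating walk of length `2k` from `a`: each half-step goes to a lower cover or stays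
put, each whole step goes to an upper cover or stays put, and `f` is constant from `2k` on. -/
def IsVacillatingWalk {L : Type*} [Preorder L] (k : ℕ) (a : L) (f : ℕ → L) : Prop :=
  f 0 = a ∧ (∀ i < k, f (2 * i + 1) ⩿ f (2 * i)) ∧ (∀ i < k, f (2 * i + 1) ⩿ f (2 * i + 2)) ∧
    ∀ j, 2 * k ≤ j → f j = f (2 * k)

namespace IsVacillatingWalk

section Preorder

variable {L : Type*} [Preorder L] {k : ℕ} {a b c : L} {f : ℕ → L}

theorem zero_iff : IsVacillatingWalk 0 a f ↔ f = fun _ => a := by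
  refine ⟨fun hf => funext fun j => (hf.2.2.2 j (by lia)).trans hf.1, ?_⟩
  rintro rfl
  exact ⟨rfl, fun i hi => by lia, fun i hi => by lia, fun _ _ => rfl⟩

theorem tail (hf : IsVacillatingWalk (k + 1) a f) :
    IsVacillatingWalk k (f 2) (fun j => f (j + 2)) :=
  ⟨rfl, fun i hi => hf.2.1 (i + 1) (by lia), fun i hi => hf.2.2.1 (i + 1) (by lia),
    fun j hj => hf.2.2.2 (j + 2) (by lia)⟩

/-- The sequence `a, b, f 0, f 1, …`. -/
def cons (a b : L) (f : ℕ → L) : ℕ → L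
  | 0 => a
  | 1 => b
  | j + 2 => f j

theorem isVacillatingWalk_cons (hba : b ⩿ a) (hbc : b ⩿ c) (hf : IsVacillatingWalk k c f) :
    IsVacillatingWalk (k + 1) a (cons a b f) := by
  obtain ⟨rfl, hdown, hup, hconst⟩ := hf
  refine ⟨rfl, ?_, ?_, ?_⟩
  · rintro (_ | i) hi
    exacts [hba, hdown i (by lia)]
  · rintro (_ | i) hi
    exacts [hbc, hup i (by lia)]
  · rintro (_ | _ | j) hj
    exacts [by lia, by lia, hconst j (by lia)]

/-- A walk with `k + 1` double steps is a first double step followed by a walk with `k` of them. -/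
def succEquiv (k : ℕ) (a : L) : {f // IsVacillatingWalk (k + 1) a f} ≃
    Σ b : {b // b ⩿ a}, Σ c : {c // b.1 ⩿ c}, {f // IsVacillatingWalk k c.1 f} where
  toFun f := ⟨⟨f.1 1, by simpa only [f.2.1] using f.2.2.1 0 k.succ_pos⟩,
    ⟨f.1 2, f.2.2.2.1 0 k.succ_pos⟩, ⟨_, f.2.tail⟩⟩
  invFun p := ⟨cons a p.1.1 p.2.2.1, isVacillatingWalk_cons p.1.2 p.2.1.2 p.2.2.2⟩
  left_inv f := by
    ext (_ | _ | j)
    exacts [f.2.1.symm, rfl, rfl]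
  right_inv := by
    rintro ⟨b, ⟨c, hbc⟩, ⟨f, hf⟩⟩
    obtain rfl : f 0 = c := hf.1
    rfl

/-- The number of vacillating walks of length `2k` starting at each point. -/
noncomputable def count (L : Type*) [Preorder L] (k : ℕ) (a : L) : ℕ :=
  Nat.card {f // IsVacillatingWalk k a f}

theorem count_zero : count L 0 = 1 := by
  ext a
  simp [count, zero_iff]

end Preorder

section IsDifferentialLattice

variable (L : Type*) [Lattice L] [IsDifferentialLattice L]

open IsDifferentialLattice

instance finite_weakLowerCovers (a : L) : Finite {b // b ⩿ a} :=
  (((finite_lowerCovers a).insert a).subset fun _ => wcovBy_iff_eq_or_covBy.1).to_subtype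

instance finite_weakUpperCovers (a : L) : Finite {b // a ⩿ b} :=
  (((finite_upperCovers a).insert a).subset fun _ h =>
    (wcovBy_iff_eq_or_covBy.1 h).imp_left Eq.symm).to_subtype

instance (k : ℕ) (a : L) : Finite {f // IsVacillatingWalk k a f} := by
  induction k generalizing a with
  | zero => simp only [zero_iff]; infer_instance
  | succ k ih =>
    exact .of_equiv _ (succEquiv k a).symm

theorem count_succ (k : ℕ) : count L (k + 1) = (1 + lowerSum L) ((1 + upperSum L) (count L k)) := by
  classical
  ext a
  have (a : L) := Fintype.ofFinite {b // b ⩿ a}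
  have (a : L) := Fintype.ofFinite {b // a ⩿ b}
  rw [lowerSum, upperSum, one_add_neighborSum_apply (by simp),
    sum_subtype _ fun _ => mem_insert_lowerCovers, count, Nat.card_congr (succEquiv k a),
    Nat.card_sigma]
  refine sum_congr rfl fun b _ => ?_
  rw [one_add_neighborSum_apply (by simp), sum_subtype _ fun _ => mem_insert_upperCovers,
    Nat.card_sigma]
  rfl

end IsDifferentialLattice

end IsVacillatingWalk

section LowerSet

variable {α : Type*} [PartialOrder α] {s : Set α} {c : α}

theorem isLowerSet_insert_of_minimal (hs : IsLowerSet s) (hc : Minimal (· ∉ s) c) :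
    IsLowerSet (insert c s) := by
  rintro a b hba (rfl | ha)
  · by_contra! hb
    exact hb (.inl (hba.antisymm (hc.2 (fun h => hb (.inr h)) hba)))
  · exact .inr (hs hba ha)

theorem isLowerSet_sdiff_singleton_of_maximal (hs : IsLowerSet s) (hc : Maximal (· ∈ s) c) :
    IsLowerSet (s \ {c}) :=
  hs.sdiff fun _ hb _ hd hdb => hc.eq_of_ge hb (hd ▸ hdb)

end LowerSet

section YoungLattice

variable {l n : YoungDiagram} {c : ℕ × ℕ}

theorem card_youngDiagram_lt_card (h : l < n) : l.card < n.card :=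
  card_lt_card (YoungDiagram.cells_ssubset_iff.2 h)

theorem youngDiagram_covBy_of_card (hle : l ≤ n) (hcard : n.card = l.card + 1) : l ⋖ n := by
  refine ⟨hle.lt_of_ne (by rintro rfl; lia), fun m hlm hmn => ?_⟩
  have := card_youngDiagram_lt_card hlm
  have := card_youngDiagram_lt_card hmn
  lia

/-- The cells that can be added to the Young diagram `l`. -/
def addableCells (l : YoungDiagram) : Set (ℕ × ℕ) := {c | Minimal (· ∉ l) c}

/-- The cells that can be removed from the Young diagram `l`. -/
def removableCells (l : YoungDiagram) : Set (ℕ × ℕ) := {c | Maximal (· ∈ l) c}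

/-- The Young diagram `l` with an addable cell `c` added. -/
def insertCell (l : YoungDiagram) (c : ℕ × ℕ) (hc : c ∈ addableCells l) : YoungDiagram where
  cells := insert c l.cells
  isLowerSet := by simpa using isLowerSet_insert_of_minimal l.isLowerSet hc

/-- The Young diagram `l` with a removable cell `c` removed. -/
def eraseCell (l : YoungDiagram) (c : ℕ × ℕ) (hc : c ∈ removableCells l) : YoungDiagram where
  cells := l.cells.erase c
  isLowerSet := by simpa using isLowerSet_sdiff_singleton_of_maximal l.isLowerSet hc

theorem covBy_insertCell (hc : c ∈ addableCells l) : l ⋖ insertCell l c hc :=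
  youngDiagram_covBy_of_card (subset_insert c l.cells) (card_insert_of_notMem hc.1)

theorem eraseCell_covBy (hc : c ∈ removableCells l) : eraseCell l c hc ⋖ l :=
  youngDiagram_covBy_of_card (erase_subset c l.cells) (card_erase_add_one hc.1).symm

theorem sdiff_cells_nonempty (h : l < n) : (n.cells \ l.cells).Nonempty :=
  sdiff_nonempty.2 (YoungDiagram.cells_ssubset_iff.2 h).2

theorem exists_insertCell_le (h : l < n) : ∃ c hc, insertCell l c hc ≤ n := by
  obtain ⟨c, hc⟩ := exists_minimal (sdiff_cells_nonempty h)
  obtain ⟨hcn, hcl⟩ := mem_sdiff.1 hc.1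
  refine ⟨c, ⟨hcl, fun b hb hbc => ?_⟩, insert_subset hcn h.le⟩
  exact hc.2 (mem_sdiff.2 ⟨n.isLowerSet hbc hcn, hb⟩) hbc

theorem exists_le_eraseCell (h : l < n) : ∃ c hc, l ≤ eraseCell n c hc := by
  obtain ⟨c, hc⟩ := exists_maximal (sdiff_cells_nonempty h)
  obtain ⟨hcn, hcl⟩ := mem_sdiff.1 hc.1
  refine ⟨c, ⟨hcn, fun b hb hcb => ?_⟩, subset_erase.2 ⟨h.le, hcl⟩⟩
  exact hc.2 (mem_sdiff.2 ⟨hb, fun hbl => hcl (l.isLowerSet hcb hbl)⟩) hcb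

theorem exists_insertCell_eq (h : l ⋖ n) : ∃ c hc, insertCell l c hc = n := by
  obtain ⟨c, hc, hle⟩ := exists_insertCell_le h.lt
  exact ⟨c, hc, (h.eq_or_eq (covBy_insertCell hc).le hle).resolve_left (covBy_insertCell hc).ne'⟩

theorem exists_eraseCell_eq (h : l ⋖ n) : ∃ c hc, eraseCell n c hc = l := by
  obtain ⟨c, hc, hle⟩ := exists_le_eraseCell h.lt
  exact ⟨c, hc, (h.eq_or_eq hle (eraseCell_covBy hc).le).resolve_right (eraseCell_covBy hc).ne⟩

theorem youngDiagram_covBy_iff : l ⋖ n ↔ l ≤ n ∧ n.card = l.card + 1 := by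
  refine ⟨fun h => ⟨h.le, ?_⟩, fun h => youngDiagram_covBy_of_card h.1 h.2⟩
  obtain ⟨c, hc, rfl⟩ := exists_insertCell_eq h
  exact card_insert_of_notMem hc.1

theorem youngDiagram_wcovBy_iff : l ⩿ n ↔ l ≤ n ∧ n.card ≤ l.card + 1 := by
  rw [wcovBy_iff_eq_or_covBy, youngDiagram_covBy_iff]
  constructor
  · rintro (rfl | ⟨hle, hcard⟩)
    exacts [⟨le_rfl, by lia⟩, ⟨hle, hcard.le⟩]
  · rintro ⟨hle, hcard⟩
    refine hle.eq_or_lt.imp_right fun h => ⟨hle, ?_⟩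
    have := card_youngDiagram_lt_card h
    lia

theorem ncard_upperCovers_youngDiagram (l : YoungDiagram) :
    {n | l ⋖ n}.ncard = (addableCells l).ncard := by
  refine (Set.ncard_congr (fun c hc => insertCell l c hc) (fun _ hc => covBy_insertCell hc)
    (fun c d hc _ h => ?_) fun n hn => ?_).symm
  · have hcd : insert c l.cells = insert d l.cells := congrArg YoungDiagram.cells h
    exact (insert_inj hc.1).1 hcd
  · exact exists_insertCell_eq hn

theorem ncard_lowerCovers_youngDiagram (l : YoungDiagram) :
    {m | m ⋖ l}.ncard = (removableCells l).ncard := by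
  refine (Set.ncard_congr (fun c hc => eraseCell l c hc) (fun _ hc => eraseCell_covBy hc)
    (fun c d hc _ h => ?_) fun n hn => ?_).symm
  · have hcd : l.cells.erase c = l.cells.erase d := congrArg YoungDiagram.cells h
    exact (erase_inj l.cells hc.1).1 hcd
  · exact exists_eraseCell_eq hn

theorem mk_mem_addableCells_iff {l : YoungDiagram} {i j : ℕ} :
    (i, j) ∈ addableCells l ↔ j = l.rowLen i ∧ ∀ i', i = i' + 1 → l.rowLen i < l.rowLen i' := by
  simp only [addableCells, Set.mem_ofPred_eq, Minimal, YoungDiagram.mem_iff_lt_rowLen, not_lt,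
    Prod.forall, Prod.mk_le_mk]
  constructor
  · rintro ⟨hj, hmin⟩
    have hij : j = l.rowLen i := hj.antisymm' (hmin i _ le_rfl ⟨le_rfl, hj⟩).2
    refine ⟨hij, ?_⟩
    rintro i' rfl
    by_contra! h
    have := (hmin i' j (hij ▸ h) ⟨i'.le_succ, le_rfl⟩).1
    lia
  · rintro ⟨rfl, hrow⟩
    refine ⟨le_rfl, fun a b hb hab => ?_⟩
    obtain rfl | ⟨i', rfl, hai⟩ : a = i ∨ ∃ i', i = i' + 1 ∧ a ≤ i' := by
      rcases hab.1.eq_or_lt with h | h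
      exacts [.inl h, .inr ⟨i - 1, by lia, by lia⟩]
    · exact ⟨le_rfl, hb⟩
    · have := l.rowLen_anti _ _ hai
      have := hrow i' rfl
      lia

theorem mk_mem_removableCells_iff {l : YoungDiagram} {i j : ℕ} :
    (i, j) ∈ removableCells l ↔ j + 1 = l.rowLen i ∧ l.rowLen (i + 1) < l.rowLen i := by
  simp only [removableCells, Set.mem_ofPred_eq, Maximal, YoungDiagram.mem_iff_lt_rowLen,
    Prod.forall, Prod.mk_le_mk]
  constructor
  · rintro ⟨hj, hmax⟩
    have hright : l.rowLen i ≤ j + 1 := by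
      by_contra! h
      have := (hmax i (j + 1) h ⟨le_rfl, j.le_succ⟩).2
      lia
    have hbelow : l.rowLen (i + 1) ≤ j := by
      by_contra! h
      have := (hmax (i + 1) j h ⟨i.le_succ, le_rfl⟩).1
      lia
    lia
  · rintro ⟨hj, hrow⟩
    refine ⟨by lia, fun a b hb hab => ?_⟩
    have hai : a ≤ i := by
      by_contra! h
      have := l.rowLen_anti _ _ (Nat.succ_le_of_lt h)
      lia
    obtain rfl := hab.1.antisymm hai
    exact ⟨le_rfl, by lia⟩

/-- The rows of `l` that are strictly longer than the next one. -/
def descentRows (l : YoungDiagram) : Set ℕ := {i | l.rowLen (i + 1) < l.rowLen i}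

theorem addableCells_eq_image (l : YoungDiagram) :
    addableCells l =
      (fun i => (i, l.rowLen i)) '' insert 0 (Nat.succ '' descentRows l) := by
  ext ⟨i, j⟩
  rcases i with _ | i <;> simp [mk_mem_addableCells_iff, descentRows, eq_comm, and_comm]

theorem removableCells_eq_image (l : YoungDiagram) :
    removableCells l = (fun i => (i, l.rowLen i - 1)) '' descentRows l := by
  ext ⟨i, j⟩
  refine mk_mem_removableCells_iff.trans ⟨fun ⟨hj, hi⟩ => ⟨i, hi, ?_⟩, ?_⟩
  · simp only [← hj, Nat.add_sub_cancel]
  · rintro ⟨_, hi, rfl, rfl⟩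
    exact ⟨Nat.sub_add_cancel (Nat.zero_lt_of_lt hi), hi⟩

theorem finite_removableCells (l : YoungDiagram) : (removableCells l).Finite :=
  l.cells.finite_toSet.subset fun _ hc => hc.1

theorem finite_descentRows (l : YoungDiagram) : (descentRows l).Finite := by
  have h := finite_removableCells l
  rw [removableCells_eq_image] at h
  exact h.of_finite_image fun _ _ _ _ h => congrArg Prod.fst h

theorem ncard_addableCells (l : YoungDiagram) :
    (addableCells l).ncard = (removableCells l).ncard + 1 := by
  have hinj (g : ℕ → ℕ) : Function.Injective fun i => (i, g i) := fun _ _ h => congrArg Prod.fst h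
  rw [addableCells_eq_image, removableCells_eq_image,
    Set.ncard_image_of_injective _ (hinj _), Set.ncard_image_of_injective _ (hinj _),
    Set.ncard_insert_of_notMem (by simp) ((finite_descentRows l).image _),
    Set.ncard_image_of_injective _ Nat.succ_injective]

instance : IsDifferentialLattice YoungDiagram where
  finite_lowerCovers l := by
    refine Set.Finite.subset ((finite_removableCells l).dependent_image
      fun c hc => eraseCell l c hc) fun m hm => ?_
    obtain ⟨c, hc, rfl⟩ := exists_eraseCell_eq hm
    exact ⟨c, hc, rfl⟩
  ncard_upperCovers l := by
    rw [ncard_upperCovers_youngDiagram, ncard_lowerCovers_youngDiagram,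
      ncard_addableCells]

end YoungLattice

/-- A partially defined involution of `β`, encoded by its graph. Fixed points are allowed. -/
@[ext]
structure PartialInvolution (β : Type*) where
  rel : β → β → Prop
  symm : ∀ {x y}, rel x y → rel y x
  rightUnique : Relator.RightUnique rel

namespace PartialInvolution

variable {β : Type*}

instance [Finite β] : Finite (PartialInvolution β) :=
  .of_injective rel fun _ _ => PartialInvolution.ext

instance [IsEmpty β] : Unique (PartialInvolution β) where
  default := ⟨isEmptyElim, fun {x} => isEmptyElim x, isEmptyElim⟩
  uniq S := by ext x; exact isEmptyElim x

open Classical in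
/-- The image of `a` under `S`, if there is one. -/
noncomputable def partner (S : PartialInvolution β) (a : β) : Option β :=
  if h : ∃ b, S.rel a b then some h.choose else none

theorem mem_partner {S : PartialInvolution β} {a b : β} : b ∈ S.partner a ↔ S.rel a b := by
  unfold partner
  split_ifs with h
  · rw [Option.mem_some_iff]
    exact ⟨fun hb => hb ▸ h.choose_spec, S.rightUnique h.choose_spec⟩
  · simpa using fun hb => h ⟨b, hb⟩

theorem partner_eq_iff {S : PartialInvolution β} {a : β} {c : Option β} :
    S.partner a = c ↔ ∀ b, S.rel a b ↔ b ∈ c :=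
  Option.ext_iff.trans (forall_congr' fun _ => iff_congr mem_partner Iff.rfl)

/-- The restriction of `S` to pairs of points satisfying `p`. -/
def restrict (S : PartialInvolution β) (p : β → Prop) : PartialInvolution {x // p x} where
  rel x y := S.rel x y
  symm := S.symm
  rightUnique _ _ _ hxy hxz := Subtype.ext (S.rightUnique hxy hxz)

/-- The extension of `S` by `a ↦ c`, and by `c ↦ a` when `c` is defined. -/
def extend (a : β) (c : Option β) (S : PartialInvolution {x // x ≠ a ∧ x ∉ c}) :
    PartialInvolution β where
  rel x y := (x = a ∧ y ∈ c) ∨ (y = a ∧ x ∈ c) ∨ ∃ hx hy, S.rel ⟨x, hx⟩ ⟨y, hy⟩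
  symm := by
    rintro x y (h | h | ⟨hx, hy, h⟩)
    exacts [.inr (.inl h), .inl h, .inr (.inr ⟨hy, hx, S.symm h⟩)]
  rightUnique := by
    rintro x y z (⟨rfl, hy⟩ | ⟨rfl, hx⟩ | ⟨hx, hy, h⟩) (⟨hxa, hz⟩ | ⟨rfl, hxc⟩ | ⟨hx', hz, h'⟩)
    · exact Option.mem_unique hy hz
    · exact (Option.mem_unique hxc hy).symm
    · exact absurd rfl hx'.1
    · subst hxa; exact Option.mem_unique hx hz
    · rfl
    · exact absurd hx hx'.2
    · exact absurd hxa hx.1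
    · exact absurd hxc hx.2
    · exact congrArg Subtype.val (S.rightUnique h h')

theorem partner_extend (a : β) (c : Option β) (S : PartialInvolution {x // x ≠ a ∧ x ∉ c}) :
    (extend a c S).partner a = c := by
  refine partner_eq_iff.2 fun b => ⟨?_, fun hb => .inl ⟨rfl, hb⟩⟩
  rintro (⟨-, hb⟩ | ⟨rfl, ha⟩ | ⟨ha, -⟩)
  exacts [hb, ha, absurd rfl ha.1]

theorem extend_restrict {S : PartialInvolution β} {a : β} {c : Option β} (h : S.partner a = c) :
    extend a c (S.restrict _) = S := by
  rw [partner_eq_iff] at h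
  ext x y
  constructor
  · rintro (⟨rfl, hy⟩ | ⟨rfl, hx⟩ | ⟨_, _, hxy⟩)
    exacts [(h y).2 hy, S.symm ((h x).2 hx), hxy]
  · intro hxy
    by_cases hx : x = a
    · exact .inl ⟨hx, (h y).1 (hx ▸ hxy)⟩
    by_cases hy : y = a
    · exact .inr (.inl ⟨hy, (h x).1 (hy ▸ S.symm hxy)⟩)
    refine .inr (.inr ⟨⟨hx, fun hxc => hy ?_⟩, ⟨hy, fun hyc => hx ?_⟩, hxy⟩)
    · exact S.rightUnique hxy (S.symm ((h x).2 hxc))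
    · exact S.rightUnique (S.symm hxy) (S.symm ((h y).2 hyc))

theorem restrict_extend (a : β) (c : Option β) (S : PartialInvolution {x // x ≠ a ∧ x ∉ c}) :
    (extend a c S).restrict _ = S := by
  ext ⟨x, hx⟩ ⟨y, hy⟩
  constructor
  · rintro (⟨hxa, -⟩ | ⟨hya, -⟩ | ⟨_, _, h⟩)
    exacts [absurd hxa hx.1, absurd hya hy.1, h]
  · exact fun h => .inr (.inr ⟨hx, hy, h⟩)

/-- A partial involution is determined by the partner `c` of a point `a` together with a partial
involution of the remaining points. -/
noncomputable def sigmaEquiv (a : β) :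
    PartialInvolution β ≃ Σ c : Option β, PartialInvolution {x // x ≠ a ∧ x ∉ c} :=
  (Equiv.sigmaFiberEquiv fun S : PartialInvolution β => S.partner a).symm.trans <|
    Equiv.sigmaCongrRight fun c =>
      { toFun := fun S => S.1.restrict _
        invFun := fun S => ⟨extend a c S, partner_extend a c S⟩
        left_inv := fun S => Subtype.ext (extend_restrict S.2)
        right_inv := restrict_extend a c }

theorem card_eq_of_recurrence {t : ℕ → ℕ} (h0 : t 0 = 1)
    (hsucc : ∀ n, t (n + 1) = 2 * t n + n * t (n - 1)) (β : Type*) [Finite β] :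
    Nat.card (PartialInvolution β) = t (Nat.card β) := by
  classical
  induction hn : Nat.card β using Nat.strong_induction_on generalizing β with
  | _ n ih =>
  rcases n with _ | n
  · have : IsEmpty β := Finite.card_eq_zero_iff.1 hn
    rw [Nat.card_unique, h0]
  have := Fintype.ofFinite β
  obtain ⟨a⟩ : Nonempty β := (Nat.card_ne_zero.1 (by lia)).1
  have hrest (s : Set β) (hs : s.ncard ≠ 0) (c : Option β) (hsc : {x | x ≠ a ∧ x ∉ c} = sᶜ) :
      Nat.card (PartialInvolution {x // x ≠ a ∧ x ∉ c}) = t (n + 1 - s.ncard) := by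
    have hcard : Nat.card {x // x ≠ a ∧ x ∉ c} = n + 1 - s.ncard := by
      rw [← hn, ← Set.ncard_compl, ← hsc]; rfl
    exact ih _ (by lia) _ hcard
  have hnone : Nat.card (PartialInvolution {x // x ≠ a ∧ x ∉ none}) = t n := by
    rw [hrest {a} (by simp) _ (by ext; simp), Set.ncard_singleton, Nat.add_sub_cancel]
  have hself : Nat.card (PartialInvolution {x // x ≠ a ∧ x ∉ some a}) = t n := by
    rw [hrest {a} (by simp) _ (by ext; simp [eq_comm]), Set.ncard_singleton, Nat.add_sub_cancel]
  have hother (b : β) (hb : b ∈ univ.erase a) :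
      Nat.card (PartialInvolution {x // x ≠ a ∧ x ∉ some b}) = t (n - 1) := by
    have hab := Set.ncard_pair (ne_of_mem_erase hb).symm
    rw [hrest {a, b} (by lia) _ (by ext; simp [eq_comm]), hab]
    rfl
  have hcard : #(univ.erase a) = n := by
    rw [card_erase_of_mem (mem_univ a), card_univ, ← Nat.card_eq_fintype_card, hn,
      Nat.add_sub_cancel]
  rw [Nat.card_congr (sigmaEquiv a), Nat.card_sigma, Fintype.sum_option,
    ← add_sum_erase _ _ (mem_univ a), hnone, hself, sum_congr rfl hother, sum_const, hcard, hsucc,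
    smul_eq_mul]
  ring

end PartialInvolution

section Setoid

variable {α β : Type*}

instance finite_setoid [Finite α] : Finite (Setoid α) :=
  .of_injective (fun r => r.r) fun _ _ h => Setoid.ext fun a b => iff_of_eq (congrFun₂ h a b)

/-- Transport of equivalence relations along a bijection. -/
noncomputable def comapSetoidEquiv (e : α ≃ β) : Setoid β ≃ Setoid α :=
  .ofBijective (Setoid.comap e)
    ⟨Setoid.comap_injective e e.surjective, Setoid.comap_surjective e e.injective⟩

theorem card_quotient_comap (e : α ≃ β) (r : Setoid β) :
    Nat.card (Quotient (r.comap e)) = Nat.card (Quotient r) :=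
  Nat.card_congr (Quotient.congr e fun _ _ => Iff.rfl)

/-- The map to the classes of `r`, extended to `none` by `o`. -/
def optionClass (r : Setoid α) (o : Option (Quotient r)) : Option α → Option (Quotient r)
  | none => o
  | some a => some ⟦a⟧

/-- The equivalence relation on `Option α` extending `r` in which `none` joins the class `o`, or
forms a class of its own if `o` is `none`. -/
def optionSetoid (r : Setoid α) (o : Option (Quotient r)) : Setoid (Option α) :=
  Setoid.ker (optionClass r o)

theorem optionSetoid_some_some {r : Setoid α} {o : Option (Quotient r)} {a b : α} :
    optionSetoid r o (some a) (some b) ↔ r a b :=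
  Option.some_inj.trans Quotient.eq

theorem comap_some_optionSetoid (r : Setoid α) (o : Option (Quotient r)) :
    (optionSetoid r o).comap some = r :=
  Setoid.ext fun _ _ => optionSetoid_some_some

theorem optionSetoid_none_some {r : Setoid α} {o : Option (Quotient r)} {a : α} :
    optionSetoid r o none (some a) ↔ ⟦a⟧ ∈ o :=
  Iff.rfl

theorem optionSetoid_injective (r : Setoid α) : Function.Injective (optionSetoid r) := by
  intro o o' h
  refine Option.ext fun q => ?_
  induction q using Quotient.ind with
  | _ a => exact Setoid.ext_iff.1 h none (some a)

theorem ext_option_setoid {R R' : Setoid (Option α)} (hsome : R.comap some = R'.comap some)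
    (hnone : ∀ a, R none (some a) ↔ R' none (some a)) : R = R' := by
  ext (_ | a) (_ | b)
  · exact iff_of_true (R.refl _) (R'.refl _)
  · exact hnone b
  · rw [R.comm', R'.comm']; exact hnone a
  · exact Setoid.ext_iff.1 hsome a b

theorem exists_optionSetoid_eq (R : Setoid (Option α)) :
    ∃ o, optionSetoid (R.comap some) o = R := by
  by_cases h : ∃ a, R none (some a)
  · obtain ⟨a, ha⟩ := h
    refine ⟨some ⟦a⟧, ext_option_setoid (comap_some_optionSetoid _ _) fun b => ?_⟩
    rw [optionSetoid_none_some, Option.mem_some_iff, Quotient.eq]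
    exact ⟨R.trans ha, R.trans (R.symm ha)⟩
  · refine ⟨none, ext_option_setoid (comap_some_optionSetoid _ _) fun b => ?_⟩
    exact iff_of_false (by simp [optionSetoid_none_some]) fun hb => h ⟨b, hb⟩

theorem optionSetoid_bijective :
    Function.Bijective fun p : Σ r : Setoid α, Option (Quotient r) => optionSetoid p.1 p.2 := by
  refine ⟨?_, fun R => ?_⟩
  · rintro ⟨r, o⟩ ⟨r', o'⟩ h
    obtain rfl : r = r' := by
      rw [← comap_some_optionSetoid r o, ← comap_some_optionSetoid r' o']
      exact congrArg _ h
    exact congrArg (Sigma.mk r) (optionSetoid_injective r h)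
  · obtain ⟨o, ho⟩ := exists_optionSetoid_eq R
    exact ⟨⟨_, o⟩, ho⟩

theorem card_quotient_optionSetoid_none [Finite α] (r : Setoid α) :
    Nat.card (Quotient (optionSetoid r none)) = Nat.card (Quotient r) + 1 := by
  have hsurj : Function.Surjective (optionClass r none) := by
    rintro (_ | ⟨⟨a⟩⟩)
    exacts [⟨none, rfl⟩, ⟨some a, rfl⟩]
  rw [← Finite.card_option]
  exact Nat.card_congr (Setoid.quotientKerEquivOfSurjective _ hsurj)

theorem card_quotient_optionSetoid_some (r : Setoid α) (q : Quotient r) :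
    Nat.card (Quotient (optionSetoid r (some q))) = Nat.card (Quotient r) := by
  have hrange : Set.range (optionClass r (some q)) = Set.range some := by
    ext x
    constructor
    · rintro ⟨_ | a, rfl⟩
      exacts [⟨q, rfl⟩, ⟨⟦a⟧, rfl⟩]
    · rintro ⟨⟨a⟩, rfl⟩
      exact ⟨some a, rfl⟩
  rw [optionSetoid, Nat.card_congr (Setoid.quotientKerEquivRange _), hrange,
    Nat.card_range_of_injective (Option.some_injective _)]

theorem sum_setoid_option [Finite α] [Fintype (Setoid α)] [Fintype (Setoid (Option α))]
    (f : ℕ → ℕ) :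
    ∑ R : Setoid (Option α), f (Nat.card (Quotient R)) =
      ∑ r : Setoid α, (f (Nat.card (Quotient r) + 1) +
        Nat.card (Quotient r) * f (Nat.card (Quotient r))) := by
  have (r : Setoid α) : Fintype (Quotient r) := Fintype.ofFinite _
  rw [← optionSetoid_bijective.sum_comp, Fintype.sum_sigma]
  refine sum_congr rfl fun r _ => ?_
  simp only [Fintype.sum_option, card_quotient_optionSetoid_none, card_quotient_optionSetoid_some,
    sum_const, card_univ, Nat.card_eq_fintype_card, smul_eq_mul]

theorem sum_setoid_of_recurrence {F : ℕ → ℕ → ℕ}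
    (hF : ∀ m j, F (m + 1) j = F m (j + 1) + j * F m j) (α : Type*) [Finite α]
    [Fintype (Setoid α)] (m : ℕ) :
    ∑ r : Setoid α, F m (Nat.card (Quotient r)) = F (m + Nat.card α) 0 := by
  suffices h : ∀ m, ∀ [Fintype (Setoid α)],
      ∑ r : Setoid α, F m (Nat.card (Quotient r)) = F (m + Nat.card α) 0 from h m
  clear m
  induction α using Finite.induction_empty_option with
  | of_equiv e ih =>
    intro m _
    have := Fintype.ofEquiv _ (comapSetoidEquiv e)
    rw [← Nat.card_congr e, ← ih m, ← (comapSetoidEquiv e).sum_comp]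
    exact sum_congr rfl fun r _ => congrArg (F m) (card_quotient_comap e r).symm
  | h_empty =>
    intro m _
    have : Subsingleton (Setoid PEmpty) := ⟨fun r s => Setoid.ext fun a => a.elim⟩
    rw [Fintype.sum_subsingleton _ ⊥]
    simp
  | h_option ih =>
    rename_i α _
    intro m _
    have := Fintype.ofFinite (Setoid α)
    rw [sum_setoid_option, ← sum_congr rfl fun r _ => hF m (Nat.card (Quotient r)), ih (m + 1),
      Finite.card_option]
    congr 1
    lia

end Setoid

section SwapInvariant

variable {α : Type*}

/-- The equivalence relation on two copies of `α` which is `r` on each copy and joins each class in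
one copy to its partner under `S` in the other. -/
def glueSetoid (r : Setoid α) (S : PartialInvolution (Quotient r)) : Setoid (α ⊕ α) where
  r
    | .inl a, .inl b | .inr a, .inr b => r a b
    | .inl a, .inr b | .inr a, .inl b => S.rel ⟦a⟧ ⟦b⟧
  iseqv :=
    { refl := by rintro (a | a) <;> exact r.refl a
      symm := by
        rintro (a | a) (b | b) h
        exacts [r.symm h, S.symm h, S.symm h, r.symm h]
      trans := by
        have left {a b c} (h : r a b) (h' : S.rel ⟦b⟧ ⟦c⟧) : S.rel ⟦a⟧ ⟦c⟧ := Quotient.sound h ▸ h'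
        have right {a b c} (h : S.rel ⟦a⟧ ⟦b⟧) (h' : r b c) : S.rel ⟦a⟧ ⟦c⟧ := Quotient.sound h' ▸ h
        have cross {a b c} (h : S.rel ⟦a⟧ ⟦b⟧) (h' : S.rel ⟦b⟧ ⟦c⟧) : r a c :=
          Quotient.exact (S.rightUnique (S.symm h) h')
        rintro (a | a) (b | b) (c | c) h h'
        exacts [r.trans h h', left h h', cross h h', right h h', right h h', cross h h', left h h',
          r.trans h h'] }

theorem glueSetoid_le_comap_swap (r : Setoid α) (S : PartialInvolution (Quotient r)) :
    glueSetoid r S ≤ (glueSetoid r S).comap Sum.swap := by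
  rintro (a | a) (b | b) h <;> exact h

/-- The partial involution on the classes within one copy of `α` induced by a swap-invariant
equivalence relation on two copies. -/
def crossInvolution (R : Setoid (α ⊕ α)) (hR : R ≤ R.comap Sum.swap) :
    PartialInvolution (Quotient (R.comap Sum.inl)) where
  rel := Quotient.lift₂ (fun a b => R (.inl a) (.inr b)) fun a b a' b' ha hb =>
    propext ⟨fun h => R.trans (R.trans (R.symm ha) h) (hR hb),
      fun h => R.trans (R.trans ha h) (R.symm (hR hb))⟩
  symm := by
    rintro ⟨a⟩ ⟨b⟩ h
    exact R.symm (hR h)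
  rightUnique := by
    rintro ⟨a⟩ ⟨b⟩ ⟨c⟩ hb hc
    exact Quotient.sound (hR (R.trans (R.symm hb) hc))

/-- A swap-invariant equivalence relation on two copies of `α` is an equivalence relation on `α`
together with a partial involution of its classes. -/
def swapInvariantSetoidEquiv :
    {R : Setoid (α ⊕ α) // R ≤ R.comap Sum.swap} ≃
      Σ r : Setoid α, PartialInvolution (Quotient r) where
  toFun R := ⟨R.1.comap Sum.inl, crossInvolution R.1 R.2⟩
  invFun p := ⟨glueSetoid p.1 p.2, glueSetoid_le_comap_swap p.1 p.2⟩
  left_inv R := by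
    ext (a | a) (b | b)
    exacts [Iff.rfl, Iff.rfl, ⟨fun h => R.2 h, fun h => R.2 h⟩, ⟨fun h => R.2 h, fun h => R.2 h⟩]
  right_inv := by
    rintro ⟨r, S⟩
    refine congrArg (Sigma.mk r) (PartialInvolution.ext ?_)
    ext ⟨a⟩ ⟨b⟩
    rfl

theorem card_swapInvariant_setoid_of_recurrence {F : ℕ → ℕ → ℕ} (h00 : F 0 0 = 1)
    (h0 : ∀ j, F 0 (j + 1) = 2 * F 0 j + j * F 0 (j - 1))
    (hF : ∀ m j, F (m + 1) j = F m (j + 1) + j * F m j) (α : Type*) [Finite α] :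
    Nat.card {R : Setoid (α ⊕ α) // R ≤ R.comap Sum.swap} = F (Nat.card α) 0 := by
  have := Fintype.ofFinite (Setoid α)
  calc Nat.card {R : Setoid (α ⊕ α) // R ≤ R.comap Sum.swap}
      = ∑ r : Setoid α, Nat.card (PartialInvolution (Quotient r)) := by
        rw [Nat.card_congr swapInvariantSetoidEquiv, Nat.card_sigma]
    _ = ∑ r : Setoid α, F 0 (Nat.card (Quotient r)) :=
        sum_congr rfl fun r _ => PartialInvolution.card_eq_of_recurrence h00 h0 _
    _ = F (Nat.card α) 0 := by rw [sum_setoid_of_recurrence hF, zero_add]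

end SwapInvariant

section Finpartition

variable {X : Type*} [Fintype X] [DecidableEq X]

theorem mem_part_iff_ker {P : Finpartition (univ : Finset X)} {a b : X} :
    b ∈ P.part a ↔ Setoid.ker P.part a b :=
  (P.mem_part_iff_part_eq_part (mem_univ b) (mem_univ a)).trans eq_comm

theorem parts_eq_image_part (P : Finpartition (univ : Finset X)) :
    P.parts = univ.image P.part := by
  ext B
  simp only [mem_image, mem_univ, true_and]
  refine ⟨fun hB => ?_, ?_⟩
  · obtain ⟨a, ha⟩ := P.nonempty_of_mem_parts hB
    exact ⟨a, P.part_eq_of_mem hB ha⟩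
  · rintro ⟨a, rfl⟩
    exact P.part_mem.2 (mem_univ a)

open Classical in
theorem ker_part_ofSetoid (r : Setoid X) : Setoid.ker (Finpartition.ofSetoid r).part = r := by
  ext a b
  rw [← mem_part_iff_ker, Finpartition.mem_part_ofSetoid_iff_rel]

open Classical in
theorem ofSetoid_ker_part (P : Finpartition (univ : Finset X)) :
    Finpartition.ofSetoid (Setoid.ker P.part) = P := by
  have hpart : (Finpartition.ofSetoid (Setoid.ker P.part)).part = P.part := by
    ext a b
    rw [Finpartition.mem_part_ofSetoid_iff_rel, mem_part_iff_ker]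
  ext1
  rw [parts_eq_image_part, parts_eq_image_part, hpart]

open Classical in
/-- Partitions of a finite type correspond to equivalence relations on it. -/
noncomputable def finpartitionEquivSetoid : Finpartition (univ : Finset X) ≃ Setoid X where
  toFun P := Setoid.ker P.part
  invFun r := Finpartition.ofSetoid r
  left_inv := ofSetoid_ker_part
  right_inv := ker_part_ofSetoid

theorem image_parts_eq_iff_ker_le_comap {s : X → X} (hs : s.Involutive)
    (P : Finpartition (univ : Finset X)) :
    P.parts.image (fun B => B.image s) = P.parts ↔
      Setoid.ker P.part ≤ (Setoid.ker P.part).comap s := by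
  constructor
  · intro h a b hab
    have hpart (c : X) : P.part (s c) = (P.part c).image s := by
      refine P.part_eq_of_mem ?_ (mem_image_of_mem s (P.mem_part (mem_univ c)))
      exact h ▸ mem_image_of_mem _ (P.part_mem.2 (mem_univ c))
    simpa only [Setoid.comap_rel, Setoid.ker_def, hpart] using congrArg (image s) hab
  · intro h
    have hpart (a : X) : (P.part a).image s = P.part (s a) := by
      ext b
      rw [mem_image, mem_part_iff_ker]
      constructor
      · rintro ⟨c, hc, rfl⟩
        exact h (mem_part_iff_ker.1 hc)
      · refine fun hb => ⟨s b, mem_part_iff_ker.2 ?_, hs b⟩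
        simpa only [Setoid.comap_rel, hs a] using h hb
    rw [parts_eq_image_part, image_image, Function.comp_def, funext hpart,
      ← Function.comp_def P.part s, ← image_image, image_univ_of_surjective hs.surjective]

theorem card_invariant_finpartition {s : X → X} (hs : s.Involutive) :
    Nat.card {P : Finpartition (univ : Finset X) // P.parts.image (fun B => B.image s) = P.parts} =
      Nat.card {R : Setoid X // R ≤ R.comap s} :=
  Nat.card_congr <| finpartitionEquivSetoid.subtypeEquiv (image_parts_eq_iff_ker_le_comap hs)

theorem card_invariant_setoid_congr {X Y : Type*} {s : X → X} {t : Y → Y} (e : X ≃ Y)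
    (h : ∀ x, e (s x) = t (e x)) :
    Nat.card {R : Setoid Y // R ≤ R.comap t} = Nat.card {R : Setoid X // R ≤ R.comap s} := by
  refine Nat.card_congr ((comapSetoidEquiv e).subtypeEquiv fun R =>
    ⟨fun hR x y hxy => ?_, fun hR x y hxy => ?_⟩)
  · change R (e (s x)) (e (s y))
    rw [h, h]
    exact hR hxy
  · obtain ⟨x, rfl⟩ := e.surjective x
    obtain ⟨y, rfl⟩ := e.surjective y
    rw [Setoid.comap_rel, ← h, ← h]
    exact hR hxy

/-- Two copies of `Fin k`, with the second one reversed. -/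
def finSumFinRevEquiv (k : ℕ) : Fin k ⊕ Fin k ≃ Fin (2 * k) :=
  ((Equiv.sumCongr (Equiv.refl _) Fin.revPerm).trans finSumFinEquiv).trans
    (finCongr (two_mul k).symm)

theorem finSumFinRevEquiv_swap {k : ℕ} (x : Fin k ⊕ Fin k) :
    finSumFinRevEquiv k x.swap = (finSumFinRevEquiv k x).rev := by
  rcases x with i | i <;> ext <;> simp [finSumFinRevEquiv] <;> lia

end Finpartition

section VacillatingTableau

theorem vacSeq_iff_isVacillatingWalk {k : ℕ} {f : ℕ → YoungDiagram} :
    VacSeq k f ↔ IsVacillatingWalk k ⊥ f := by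
  simp only [VacSeq, IsVacillatingWalk, youngDiagram_wcovBy_iff]

theorem VacSeq.card_le {k : ℕ} {f : ℕ → YoungDiagram} (hf : VacSeq k f) {i : ℕ} (hi : i ≤ k) :
    (f (2 * i)).card ≤ i := by
  induction i with
  | zero => simp [hf.1, YoungDiagram.card]
  | succ i ih =>
    have hdown := card_le_card (hf.2.1 i hi).1
    have hup := (hf.2.2.1 i hi).2
    exact hup.trans (Nat.succ_le_succ (hdown.trans (ih (by lia))))

theorem finsum_card_fiber {ι β : Type*} [Finite ι] (e : ι → β) {s : Set β} (hs : ∀ i, e i ∈ s) :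
    ∑ᶠ b ∈ s, Nat.card {i // e i = b} = Nat.card ι := by
  classical
  have := Fintype.ofFinite ι
  have hfiber (b : β) : Nat.card {i // e i = b} = #{i | e i = b} := by
    rw [Nat.card_eq_fintype_card, Fintype.card_subtype]
  simp only [hfiber]
  rw [finsum_mem_eq_sum_of_subset (t := univ.image e), ← card_eq_sum_card_image,
    card_univ, Nat.card_eq_fintype_card]
  · rintro b ⟨-, hb⟩
    obtain ⟨i, hi⟩ := card_ne_zero.1 hb
    exact mem_coe.2 (mem_image.2 ⟨i, mem_univ i, (mem_filter.1 hi).2⟩)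
  · simpa [Set.range_subset_iff] using hs

theorem finsum_mVT (k : ℕ) :
    ∑ᶠ lam ∈ {lam : YoungDiagram | lam.card ≤ k}, mVT k lam =
      IsVacillatingWalk.count YoungDiagram k ⊥ := by
  have : Finite {f // VacSeq k f} := by
    simp only [vacSeq_iff_isVacillatingWalk]; infer_instance
  have hmVT (lam : YoungDiagram) :
      mVT k lam = Nat.card {f : {f // VacSeq k f} // f.1 (2 * k) = lam} :=
    (Nat.card_congr
      (Equiv.subtypeSubtypeEquivSubtypeInter (VacSeq k) fun f => f (2 * k) = lam)).symm
  simp only [hmVT, IsVacillatingWalk.count, ← vacSeq_iff_isVacillatingWalk]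
  exact finsum_card_fiber _ fun f => f.2.card_le le_rfl

end VacillatingTableau

open IsDifferentialLattice in
theorem card_symmetric_partitions_general (L : Type*) [Lattice L] [IsDifferentialLattice L]
    [OrderBot L] (k : ℕ) :
    Nat.card {P : Finpartition (univ : Finset (Fin (2 * k))) //
        P.parts.image (fun B => B.image Fin.rev) = P.parts} =
      IsVacillatingWalk.count L k ⊥ := by
  let F (m j : ℕ) : ℕ := ascentSum L j (IsVacillatingWalk.count L m)
  have hF : ∀ m j, F (m + 1) j = F m (j + 1) + j * F m j := fun m j => by
    simp only [F, IsVacillatingWalk.count_succ, ascentSum_one_add_lowerSum]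
  have h00 : F 0 0 = 1 := by
    simp only [F, ascentSum_zero, IsVacillatingWalk.count_zero, Pi.one_apply]
  have h0 : ∀ j, F 0 (j + 1) = 2 * F 0 j + j * F 0 (j - 1) := fun j => by
    simp only [F, IsVacillatingWalk.count_zero, ascentSum_succ_one]
  calc _ = Nat.card {R : Setoid (Fin (2 * k)) // R ≤ R.comap Fin.rev} :=
        card_invariant_finpartition Fin.rev_involutive
    _ = Nat.card {R : Setoid (Fin k ⊕ Fin k) // R ≤ R.comap Sum.swap} :=
        card_invariant_setoid_congr (finSumFinRevEquiv k) finSumFinRevEquiv_swap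
    _ = F k 0 := by
        rw [card_swapInvariant_setoid_of_recurrence h00 h0 hF, Nat.card_fin]
    _ = IsVacillatingWalk.count L k ⊥ := ascentSum_zero L _

/-- The number of symmetric set partitions of `{1,...,k,1',...,k'}` (fixed by the flip
`i ↔ i'`, which in the one-row standard representation on `2k` vertices is the
reversal `v ↦ 2k+1-v`) equals the sum over partitions `λ` of size at most `k` of the
number of vacillating tableaux of shape `λ` and length `2k`. -/
theorem card_symmetric_partitions (k : ℕ) :
    Nat.card {P : Finpartition (Finset.univ : Finset (Fin (2*k))) //
        P.parts.image (fun B => B.image Fin.rev) = P.parts} =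
      ∑ᶠ lam ∈ {lam : YoungDiagram | lam.card ≤ k}, mVT k lam := by
  rw [card_symmetric_partitions_general YoungDiagram, finsum_mVT]
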